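/- arXiv:1607.03393 — 3 statements merged into one kernel-verified Lean document; each statement's English description precedes it below -/
import Mathlib

section
/- Let R(x,y) = (α_x(y), β_y(x)) be a non-degenerate YBE solution on a set X. Then there exists a group homomorphism Θ : G_R → Aut(A_R) such that Θ(ι_G x)(ι_A y) = ι_A(α_x(y)) for all x, y ∈ X; in particular each α_x extends to an automorphism of the derived structure group A_R preserving the image of X. -/
/-- The map acting as `R` on the first two coordinates of `X × X × X` (i.e. `R × id_X`). -/
def Rfst {X : Type*} (R : X × X → X × X) : X × X × X → X × X × X :=
  fun p => ((R (p.1, p.2.1)).1, (R (p.1, p.2.1)).2, p.2.2)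

/-- The map acting as `R` on the last two coordinates of `X × X × X` (i.e. `id_X × R`). -/
def Rsnd {X : Type*} (R : X × X → X × X) : X × X × X → X × X × X :=
  fun p => (p.1, R p.2)

/-- The braid relation `(R × id) ∘ (id × R) ∘ (R × id) = (id × R) ∘ (R × id) ∘ (id × R)`. -/
def IsBraided {X : Type*} (R : X × X → X × X) : Prop :=
  Rfst R ∘ Rsnd R ∘ Rfst R = Rsnd R ∘ Rfst R ∘ Rsnd R

/-- The map `R(x, y) = (α_x(y), β_y(x))`. -/
def YBEform {X : Type*} (α β : X → X → X) : X × X → X × X :=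
  fun p => (α p.1 p.2, β p.2 p.1)


/-- The defining relators of the structure group of `R(x,y) = (α_x(y), β_y(x))`:
`x * y = α_x(y) * β_y(x)`. -/
def ybRels {X : Type*} (α β : X → X → X) : Set (FreeGroup X) :=
  {r | ∃ x y : X, r = FreeGroup.of x * FreeGroup.of y *
        (FreeGroup.of (α x y) * FreeGroup.of (β y x))⁻¹}

/-- The structure group `G_R` of the solution `R(x,y) = (α_x(y), β_y(x))`. -/
abbrev StructureGroup {X : Type*} (α β : X → X → X) : Type _ :=
  PresentedGroup (ybRels α β)

/-- The defining relators of the derived structure group of `R`: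
`x * y = y * φ_R(x,y)` with `φ_R(x,y) = α_y(β_{α_x⁻¹(y)}(x))`. -/
def derivedRels {X : Type*} (α β αinv : X → X → X) : Set (FreeGroup X) :=
  {r | ∃ x y : X, r = FreeGroup.of x * FreeGroup.of y *
        (FreeGroup.of y * FreeGroup.of (α y (β (αinv x y) x)))⁻¹}

/-- The derived structure group `A_R` of the solution `R`. -/
abbrev DerivedGroup {X : Type*} (α β αinv : X → X → X) : Type _ :=
  PresentedGroup (derivedRels α β αinv)

/-!
The braid relation says, in its first two coordinates, that `α_{α_x(y)} α_{β_y(x)} = α_x α_y` and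
`β_{α_{β_y(x)}(z)}(α_x(y)) = α_{β_{α_y(z)}(x)}(β_z(y))`. By the first identity, `x ↦ α_x` extends
to an action of `G_R` on `X`. Substituting `y = α_x(t)` turns `φ_R(x, y)` into `α_{α_x(t)}(β_t(x))`,
and the two identities together then show that every `α_z` is an automorphism of the operation
`φ_R`. Hence `G_R` permutes the generators of `A_R` and preserves its set of relators.
-/

section RelatorSymmetries

variable {X : Type*} {rels : Set (FreeGroup X)}

/-- The group of permutations of the generators that preserve a given set of relators. Such
permutations induce automorphisms of the presented group. The condition is an equivalence because
mapping `rels` into itself does not pass to the inverse when `rels` is infinite. -/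
def relatorSymmetries (rels : Set (FreeGroup X)) : Subgroup (Equiv.Perm X) where
  carrier := {σ | ∀ r, FreeGroup.map σ r ∈ rels ↔ r ∈ rels}
  one_mem' r := by rw [Equiv.Perm.coe_one, FreeGroup.map.id]
  mul_mem' {σ τ} hσ hτ r := by rw [Equiv.Perm.coe_mul, ← FreeGroup.map.comp, hσ, hτ]
  inv_mem' {σ} hσ r := by
    rw [← hσ, FreeGroup.map.comp, ← Equiv.Perm.coe_mul, mul_inv_cancel, Equiv.Perm.coe_one,
      FreeGroup.map.id]

/-- The endomorphism of a presented group induced by a symmetry of its relators. -/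
def presentedGroupEnd (σ : relatorSymmetries rels) : PresentedGroup rels →* PresentedGroup rels :=
  PresentedGroup.map (FreeGroup.map σ) fun r hr ↦ (σ.2 r).2 hr

theorem presentedGroupEnd_of (σ : relatorSymmetries rels) (x : X) :
    presentedGroupEnd σ (.of x) = .of (σ.1 x) :=
  rfl

theorem presentedGroupEnd_one : presentedGroupEnd (1 : relatorSymmetries rels) = .id _ :=
  PresentedGroup.ext fun _ ↦ rfl

theorem presentedGroupEnd_mul (σ τ : relatorSymmetries rels) :
    presentedGroupEnd (σ * τ) = (presentedGroupEnd σ).comp (presentedGroupEnd τ) :=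
  PresentedGroup.ext fun _ ↦ rfl

/-- The action of the symmetries of the relators on the presented group by automorphisms. -/
instance : MulDistribMulAction (relatorSymmetries rels) (PresentedGroup rels) where
  smul σ := presentedGroupEnd σ
  one_smul := DFunLike.congr_fun presentedGroupEnd_one
  mul_smul σ τ := DFunLike.congr_fun (presentedGroupEnd_mul σ τ)
  smul_mul σ := map_mul (presentedGroupEnd σ)
  smul_one σ := map_one (presentedGroupEnd σ)

theorem relatorSymmetries_smul_of (σ : relatorSymmetries rels) (x : X) :
    σ • (PresentedGroup.of x : PresentedGroup rels) = PresentedGroup.of (σ.1 x) :=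
  presentedGroupEnd_of σ x

end RelatorSymmetries

section YangBaxter

variable {X : Type*} {α β αinv : X → X → X}

theorem IsBraided.left_comp_left (hYB : IsBraided (YBEform α β)) (x y z : X) :
    α (α x y) (α (β y x) z) = α x (α y z) :=
  congrArg Prod.fst (congrFun hYB (x, y, z))

theorem IsBraided.right_left (hYB : IsBraided (YBEform α β)) (x y z : X) :
    β (α (β y x) z) (α x y) = α (β (α y z) x) (β z y) :=
  congrArg (fun p ↦ p.2.1) (congrFun hYB (x, y, z))

/-- The operation `φ_R(x, y) = α_y(β_{α_x⁻¹(y)}(x))` for which `derivedRels` is the set of relators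
`x * y = y * φ_R(x, y)`. -/
def derivedOp (α β αinv : X → X → X) (x y : X) : X :=
  α y (β (αinv x y) x)

theorem derivedOp_left {x : X} (hx : Function.LeftInverse (αinv x) (α x)) (t : X) :
    derivedOp α β αinv x (α x t) = α (α x t) (β t x) := by
  rw [derivedOp, hx]

theorem IsBraided.left_derivedOp (hYB : IsBraided (YBEform α β))
    (hinv : ∀ x, Function.LeftInverse (αinv x) (α x) ∧ Function.RightInverse (αinv x) (α x))
    (z x y : X) :
    α z (derivedOp α β αinv x y) = derivedOp α β αinv (α z x) (α z y) := by
  obtain ⟨t, rfl⟩ := (hinv x).2.surjective y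
  calc α z (derivedOp α β αinv x (α x t))
      = α z (α (α x t) (β t x)) := by rw [derivedOp_left (hinv _).1]
    _ = α (α z (α x t)) (α (β (α x t) z) (β t x)) := (hYB.left_comp_left _ _ _).symm
    _ = α (α z (α x t)) (β (α (β x z) t) (α z x)) := by rw [hYB.right_left]
    _ = α (α (α z x) (α (β x z) t)) (β (α (β x z) t) (α z x)) := by rw [hYB.left_comp_left]
    _ = derivedOp α β αinv (α z x) (α (α z x) (α (β x z) t)) := (derivedOp_left (hinv _).1 _).symm
    _ = derivedOp α β αinv (α z x) (α z (α x t)) := by rw [hYB.left_comp_left]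

theorem mem_relatorSymmetries_derivedRels {σ : Equiv.Perm X}
    (hσ : ∀ x y, σ (derivedOp α β αinv x y) = derivedOp α β αinv (σ x) (σ y)) :
    σ ∈ relatorSymmetries (derivedRels α β αinv) := by
  have map_relator (x y : X) :
      FreeGroup.map σ (.of x * .of y * (.of y * .of (derivedOp α β αinv x y))⁻¹) =
        .of (σ x) * .of (σ y) * (.of (σ y) * .of (derivedOp α β αinv (σ x) (σ y)))⁻¹ := by
    simp only [map_mul, map_inv, FreeGroup.map.of, hσ]
  refine fun r ↦ ⟨?_, ?_⟩
  · rintro ⟨x, y, hr⟩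
    obtain ⟨x, rfl⟩ := σ.surjective x
    obtain ⟨y, rfl⟩ := σ.surjective y
    exact ⟨x, y, FreeGroup.map_injective σ.injective (hr.trans (map_relator x y).symm)⟩
  · rintro ⟨x, y, rfl⟩
    exact ⟨σ x, σ y, map_relator x y⟩

variable (hinv : ∀ x, Function.LeftInverse (αinv x) (α x) ∧ Function.RightInverse (αinv x) (α x))

/-- The permutation `α_x` of `X`, with inverse `αinv x`. -/
def leftPerm (x : X) : Equiv.Perm X :=
  ⟨α x, αinv x, (hinv x).1, (hinv x).2⟩

theorem IsBraided.leftPerm_mem_relatorSymmetries (hYB : IsBraided (YBEform α β)) (x : X) :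
    leftPerm hinv x ∈ relatorSymmetries (derivedRels α β αinv) :=
  mem_relatorSymmetries_derivedRels (hYB.left_derivedOp hinv x)

theorem IsBraided.leftPerm_mul_leftPerm (hYB : IsBraided (YBEform α β)) (x y : X) :
    leftPerm hinv x * leftPerm hinv y = leftPerm hinv (α x y) * leftPerm hinv (β y x) :=
  Equiv.ext fun z ↦ (hYB.left_comp_left x y z).symm

/-- The homomorphism from `G_R` to the symmetries of the relators of `A_R` that extends
`x ↦ α_x`. -/
def IsBraided.leftAction (hYB : IsBraided (YBEform α β)) :
    StructureGroup α β →* relatorSymmetries (derivedRels α β αinv) :=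
  PresentedGroup.toGroup
    (f := fun x ↦ ⟨leftPerm hinv x, hYB.leftPerm_mem_relatorSymmetries hinv x⟩)
    (by
      rintro _ ⟨x, y, rfl⟩
      simp only [map_mul, map_inv, FreeGroup.lift_apply_of, mul_inv_eq_one]
      exact Subtype.ext (hYB.leftPerm_mul_leftPerm hinv x y))

theorem IsBraided.leftAction_of_apply (hYB : IsBraided (YBEform α β)) (x y : X) :
    (hYB.leftAction hinv (.of x)).1 y = α x y :=
  congrArg (fun σ : relatorSymmetries (derivedRels α β αinv) ↦ σ.1 y) (PresentedGroup.toGroup.of _)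

end YangBaxter

theorem stmt7_general {X : Type*} (α β αinv : X → X → X) (hYB : IsBraided (YBEform α β))
    (hinv : ∀ x, Function.LeftInverse (αinv x) (α x) ∧
      Function.RightInverse (αinv x) (α x)) :
    ∃ Θ : StructureGroup α β →* MulAut (DerivedGroup α β αinv),
      ∀ x y : X, Θ (PresentedGroup.of x) (PresentedGroup.of y) =
        PresentedGroup.of (α x y) := by
  refine ⟨(MulDistribMulAction.toMulAut _ _).comp (hYB.leftAction hinv), fun x y ↦ ?_⟩
  calc hYB.leftAction hinv (.of x) • (PresentedGroup.of y : DerivedGroup α β αinv)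
      = .of ((hYB.leftAction hinv (.of x)).1 y) := relatorSymmetries_smul_of _ y
    _ = .of (α x y) := by rw [hYB.leftAction_of_apply]

theorem stmt7 {X : Type*} (α β αinv : X → X → X)
    (hbij : Function.Bijective (YBEform α β))
    (hYB : IsBraided (YBEform α β))
    (hα : ∀ x, Function.Bijective (α x)) (hβ : ∀ x, Function.Bijective (β x))
    (hinv : ∀ x, Function.LeftInverse (αinv x) (α x) ∧
      Function.RightInverse (αinv x) (α x)) :
    ∃ Θ : StructureGroup α β →* MulAut (DerivedGroup α β αinv),
      ∀ x y : X, Θ (PresentedGroup.of x) (PresentedGroup.of y) =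
        PresentedGroup.of (α x y) :=
  stmt7_general α β αinv hYB hinv
end

section
/- Let G, G̃, A, Ã be groups, π : G → Aut(A) a homomorphism with 1-cocycle b : G → A, π̃ : G̃ → Aut(Ã) a homomorphism with bijective 1-cocycle b̃ : G̃ → Ã, and θ : G → Aut(G̃) a homomorphism such that θ(g) ∘ (b̃⁻¹ ∘ π̃(h) ∘ b̃) = (b̃⁻¹ ∘ π̃(θ(g)(h)) ∘ b̃) ∘ θ(g) as maps G̃ → G̃, for all g ∈ G and h ∈ G̃. For (g,h) ∈ G × G̃ define Γ_{(g,h)} : A × Ã → A × Ã by Γ_{(g,h)}(a,t) = (b(g)·π(g)(a), b̃(h)·π̃(h)(b̃(θ(g)(b̃⁻¹(t))))). Then Γ_{(g g', h·θ(g)(h'))} = Γ_{(g,h)} ∘ Γ_{(g',h')} for all g, g' ∈ G and h, h' ∈ G̃; that is, Γ defines an action of the semidirect product group G ⋉_θ G̃ (with multiplication (g,h)(g',h') = (gg', h·θ(g)(h'))) on A × Ã. -/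
/-- The semi-direct product affine action:
`Γ_{(g,h)}(a,t) = (b(g)·π(g)(a), b̃(h)·π̃(h)(b̃(θ(g)(b̃⁻¹(t)))))`. -/
def sdGamma {G G' A A' : Type*} [Group G] [Group G'] [Group A] [Group A']
    (π : G →* MulAut A) (b : G → A) (π' : G' →* MulAut A') (b' : G' → A')
    (b'inv : A' → G') (θ : G →* MulAut G') : G × G' → A × A' → A × A' :=
  fun p q => (b p.1 * π p.1 q.1, b' p.2 * π' p.2 (b' (θ p.1 (b'inv q.2))))

/-!
With `s = b̃⁻¹(t)`, the cocycle identity turns the second coordinate of `Γ_{(g,h)}(a,t)` into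
`b̃(h·θ(g)(s))`. The projection `(g,h) ↦ h` is itself a 1-cocycle of `G ⋉_θ G̃` with respect to
`(g,h) ↦ θ(g)`, and `s ↦ h·θ(g)(s)` is its affine action. So `Γ` is a product of two affine actions,
the second one transported along `b̃`, and affine actions are multiplicative.

Mathlib writes `G ⋉_θ G̃` as `G' ⋊[θ] G`, so the pair `(g,h)` is `(x.right, x.left)`.
-/

section AffineAction

variable {G A : Type*} [MulOneClass G] [Semigroup A] {π : G →* MulAut A} {b : G → A}

/-- `b` is a 1-cocycle (crossed homomorphism) with respect to `π`; the coefficients `A` need not be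
commutative. -/
def IsOneCocycle (π : G →* MulAut A) (b : G → A) : Prop :=
  ∀ g h : G, b (g * h) = b g * π g (b h)

/-- The affine action `ρ_g(a) = b(g)·π(g)(a)` of the pair `ρ = (π, b)`, as a family of maps `A → A`
indexed by `G`; being a 1-cocycle is not part of the data, so `b` is arbitrary here. -/
def affineAction (π : G →* MulAut A) (b : G → A) (g : G) (a : A) : A :=
  b g * π g a

theorem IsOneCocycle.affineAction_mul (hb : IsOneCocycle π b) (g h : G) (a : A) :
    affineAction π b (g * h) a = affineAction π b g (affineAction π b h a) :=
  calc b (g * h) * π (g * h) a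
    _ = b g * π g (b h) * π g (π h a) := by rw [hb, map_mul, MulAut.mul_apply]
    _ = b g * π g (b h * π h a) := by rw [map_mul, mul_assoc]

theorem IsOneCocycle.affineAction_apply_self (hb : IsOneCocycle π b) (g h : G) :
    affineAction π b g (b h) = b (g * h) :=
  (hb g h).symm

end AffineAction

section SemidirectProduct

variable {G G' A A' : Type*} [Group G] [Group G'] [Group A] [Group A']

theorem isOneCocycle_semidirectProduct_left (θ : G →* MulAut G') :
    IsOneCocycle (θ.comp SemidirectProduct.rightHom) (SemidirectProduct.left : G' ⋊[θ] G → G') :=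
  SemidirectProduct.mul_left

theorem sdGamma_eq_affineAction (π : G →* MulAut A) (b : G → A) {π' : G' →* MulAut A'}
    {b' : G' → A'} (b'inv : A' → G') (θ : G →* MulAut G') (hb' : IsOneCocycle π' b')
    (x : G' ⋊[θ] G) (a : A) (t : A') :
    sdGamma π b π' b' b'inv θ (x.right, x.left) (a, t) =
      (affineAction π b x.right a,
        b' (affineAction (θ.comp SemidirectProduct.rightHom) SemidirectProduct.left x
          (b'inv t))) :=
  Prod.ext rfl (hb'.affineAction_apply_self x.left (θ x.right (b'inv t)))

theorem stmt11_general (π : G →* MulAut A) (b : G → A) (π' : G' →* MulAut A') (b' : G' → A')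
    (b'inv : A' → G') (θ : G →* MulAut G') (hb : IsOneCocycle π b) (hb' : IsOneCocycle π' b')
    (hb'inv : Function.LeftInverse b'inv b') (x y : G' ⋊[θ] G) (a : A) (t : A') :
    sdGamma π b π' b' b'inv θ ((x * y).right, (x * y).left) (a, t) =
      sdGamma π b π' b' b'inv θ (x.right, x.left)
        (sdGamma π b π' b' b'inv θ (y.right, y.left) (a, t)) := by
  have hleft := isOneCocycle_semidirectProduct_left θ
  simp only [sdGamma_eq_affineAction π b b'inv θ hb', hb'inv _]
  rw [SemidirectProduct.mul_right, hb.affineAction_mul, hleft.affineAction_mul]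

end SemidirectProduct

theorem stmt11 {G G' A A' : Type*} [Group G] [Group G'] [Group A] [Group A']
    (π : G →* MulAut A) (b : G → A) (π' : G' →* MulAut A') (b' : G' → A')
    (b'inv : A' → G') (θ : G →* MulAut G')
    (hb : ∀ g h : G, b (g * h) = b g * π g (b h))
    (hb' : ∀ g h : G', b' (g * h) = b' g * π' g (b' h))
    (hb'inv₁ : Function.LeftInverse b'inv b')
    (hb'inv₂ : Function.RightInverse b'inv b')
    (hcomp : ∀ (g : G) (h t : G'),
      θ g (b'inv (π' h (b' t))) = b'inv (π' (θ g h) (b' (θ g t)))) :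
    ∀ (g g' : G) (h h' : G') (a : A) (t : A'),
      sdGamma π b π' b' b'inv θ (g * g', h * θ g h') (a, t) =
        sdGamma π b π' b' b'inv θ (g, h)
          (sdGamma π b π' b' b'inv θ (g', h') (a, t)) :=
  fun g g' h h' => stmt11_general π b π' b' b'inv θ hb hb' hb'inv₁ ⟨h, g⟩ ⟨h', g'⟩
end

section
/- Let X and S be non-degenerate cycle sets, let π be an action of X on S, and let R_X and R_S be the associated symmetric YBE solutions on X and S, with structure groups G_{R_X} and G_{R_S}. Then there exists a group homomorphism π̂ : G_{R_X} → Aut(G_{R_S}) such that π̂(ι_G x)(ι_G s) = ι_G(π_x(s)) for all x ∈ X and s ∈ S; that is, π extends to an action of G_{R_X} on G_{R_S} by group automorphisms. -/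
/-!
The structure group is functorial in the solution, so the automorphism group of a solution acts on
its structure group. In the structure group of a cycle set, writing `x = c y u` turns the relation
`x * y = α x y * β y x` into `c y u * y = c u y * u`, which has exactly the shape of the condition
`π_{y·u} ∘ π_y = π_{u·y} ∘ π_u` on an action. Hence `π` extends to a homomorphism from the structure
group of `X` to the automorphism group of the solution on `S`, and composing with the action above
gives `π̂`.
-/

namespace StructureGroup

variable {X Y G : Type*} [Group G] {α β : X → X → X} {α' β' : Y → Y → Y}

theorem of_mul_of (x y : X) :
    (PresentedGroup.of x * PresentedGroup.of y : StructureGroup α β) =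
      PresentedGroup.of (α x y) * PresentedGroup.of (β y x) :=
  PresentedGroup.mk_eq_mk_of_mul_inv_mem ⟨x, y, rfl⟩

/-- The homomorphism out of the structure group induced by a map satisfying its relations. -/
def lift (f : X → G) (hf : ∀ x y, f x * f y = f (α x y) * f (β y x)) :
    StructureGroup α β →* G :=
  PresentedGroup.toGroup (f := f) <| by
    rintro _ ⟨x, y, rfl⟩
    simpa only [map_mul, map_inv, FreeGroup.lift_apply_of, mul_inv_eq_one] using hf x y

@[simp]
theorem lift_of (f : X → G) (hf : ∀ x y, f x * f y = f (α x y) * f (β y x)) (x : X) :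
    lift f hf (PresentedGroup.of x) = f x :=
  PresentedGroup.toGroup.of _

/-- The homomorphism of structure groups induced by a morphism of solutions. -/
def map (f : X → Y) (hα : ∀ x y, f (α x y) = α' (f x) (f y))
    (hβ : ∀ y x, f (β y x) = β' (f y) (f x)) : StructureGroup α β →* StructureGroup α' β' :=
  lift (fun x => PresentedGroup.of (f x)) fun x y => by rw [hα, hβ, of_mul_of]

@[simp]
theorem map_of (f : X → Y) (hα : ∀ x y, f (α x y) = α' (f x) (f y))
    (hβ : ∀ y x, f (β y x) = β' (f y) (f x)) (x : X) :
    map f hα hβ (PresentedGroup.of x) = PresentedGroup.of (f x) :=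
  lift_of _ _ x

end StructureGroup

/-- The automorphism group of the solution `R(x,y) = (α_x(y), β_y(x))`: the permutations `f` of `X`
such that `f × f` commutes with `R`. -/
def solutionAut {X : Type*} (α β : X → X → X) : Subgroup (Equiv.Perm X) where
  carrier := {f | (∀ x y, f (α x y) = α (f x) (f y)) ∧ ∀ y x, f (β y x) = β (f y) (f x)}
  one_mem' := ⟨fun _ _ => rfl, fun _ _ => rfl⟩
  mul_mem' := fun {f g} hf hg =>
    ⟨fun x y => by simp only [Equiv.Perm.mul_apply, hg.1, hf.1],
      fun y x => by simp only [Equiv.Perm.mul_apply, hg.2, hf.2]⟩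
  inv_mem' := fun {f} hf =>
    ⟨fun x y => by
        simp only [Equiv.Perm.inv_def, Equiv.symm_apply_eq, hf.1, Equiv.apply_symm_apply],
      fun y x => by
        simp only [Equiv.Perm.inv_def, Equiv.symm_apply_eq, hf.2, Equiv.apply_symm_apply]⟩

namespace solutionAut

variable {X : Type*} {α β : X → X → X}

/-- The action of the automorphisms of a solution on its structure group, extending their action
on the generators. -/
def toMulAut : solutionAut α β →* MulAut (StructureGroup α β) where
  toFun f :=
    MonoidHom.toMulEquiv (StructureGroup.map f.1 f.2.1 f.2.2)
      (StructureGroup.map (f⁻¹).1 (f⁻¹).2.1 (f⁻¹).2.2) (by ext; simp) (by ext; simp)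
  map_one' := MulEquiv.toMonoidHom_injective <| by ext; simp
  map_mul' f g := MulEquiv.toMonoidHom_injective <| by ext; simp

@[simp]
theorem toMulAut_of (f : solutionAut α β) (x : X) :
    toMulAut f (PresentedGroup.of x) = PresentedGroup.of (f.1 x) :=
  StructureGroup.map_of f.1 f.2.1 f.2.2 x

end solutionAut

section LeftMultiplication

variable {X : Type*} {c cinv : X → X → X}

theorem mem_solutionAut_of_map_op (hleft : ∀ x, Function.LeftInverse (cinv x) (c x))
    (hright : ∀ x, Function.RightInverse (cinv x) (c x)) {f : Equiv.Perm X}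
    (hf : ∀ x y, f (c x y) = c (f x) (f y)) :
    f ∈ solutionAut (fun x y => c (cinv y x) y) cinv := by
  have hf_inv : ∀ x y, f (cinv x y) = cinv (f x) (f y) := fun x =>
    Function.Semiconj.inverses_right (hf x) (hright x) (hleft (f x))
  exact ⟨fun x y => by rw [hf, hf_inv], hf_inv⟩

theorem map_mul_map_eq_of_map_op_mul_map {M : Type*} [Mul M]
    (hright : ∀ x, Function.RightInverse (cinv x) (c x)) {f : X → M}
    (hf : ∀ x y, f (c y x) * f y = f (c x y) * f x) (x y : X) :
    f x * f y = f (c (cinv y x) y) * f (cinv y x) := by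
  simpa only [hright y x] using hf (cinv y x) y

end LeftMultiplication

theorem stmt18_general {X S : Type*} {cX cXinv : X → X → X} {cS cSinv : S → S → S}
    (p : X → Equiv.Perm S)
    (hXright : ∀ x, Function.RightInverse (cXinv x) (cX x))
    (hSleft : ∀ s, Function.LeftInverse (cSinv s) (cS s))
    (hSright : ∀ s, Function.RightInverse (cSinv s) (cS s))
    (hpmor : ∀ x s t, p x (cS s t) = cS (p x s) (p x t))
    (hpact : ∀ x y, p (cX y x) * p y = p (cX x y) * p x) :
    ∃ πhat : StructureGroup (fun x y => cX (cXinv y x) y) cXinv →*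
        MulAut (StructureGroup (fun s t => cS (cSinv t s) t) cSinv),
      ∀ (x : X) (s : S),
        πhat (PresentedGroup.of x) (PresentedGroup.of s) = PresentedGroup.of (p x s) := by
  let π (x : X) : solutionAut (fun s t => cS (cSinv t s) t) cSinv :=
    ⟨p x, mem_solutionAut_of_map_op hSleft hSright (hpmor x)⟩
  have hπ (x y : X) : π (cX y x) * π y = π (cX x y) * π x := Subtype.ext (hpact x y)
  let toSolutionAut := StructureGroup.lift π (map_mul_map_eq_of_map_op_mul_map hXright hπ)
  refine ⟨solutionAut.toMulAut.comp toSolutionAut, fun x s => ?_⟩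
  rw [MonoidHom.comp_apply, StructureGroup.lift_of, solutionAut.toMulAut_of]

theorem stmt18 {X S : Type*} (cX cXinv : X → X → X) (cS cSinv : S → S → S)
    (p : X → S → S)
    (hXbij : ∀ x, Function.Bijective (cX x))
    (hXinv : ∀ x, Function.LeftInverse (cXinv x) (cX x) ∧
      Function.RightInverse (cXinv x) (cX x))
    (hXcycle : ∀ x y z, cX (cX x y) (cX x z) = cX (cX y x) (cX y z))
    (hXnd : Function.Bijective fun x : X => cX x x)
    (hSbij : ∀ s, Function.Bijective (cS s))
    (hSinv : ∀ s, Function.LeftInverse (cSinv s) (cS s) ∧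
      Function.RightInverse (cSinv s) (cS s))
    (hScycle : ∀ s t u, cS (cS s t) (cS s u) = cS (cS t s) (cS t u))
    (hSnd : Function.Bijective fun s : S => cS s s)
    (hpbij : ∀ x, Function.Bijective (p x))
    (hpmor : ∀ x s t, p x (cS s t) = cS (p x s) (p x t))
    (hpact : ∀ x y s, p (cX y x) (p y s) = p (cX x y) (p x s)) :
    ∃ πhat : StructureGroup (fun x y => cX (cXinv y x) y) cXinv →*
        MulAut (StructureGroup (fun s t => cS (cSinv t s) t) cSinv),
      ∀ (x : X) (s : S),
        πhat (PresentedGroup.of x) (PresentedGroup.of s) =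
          PresentedGroup.of (p x s) :=
  stmt18_general (fun x => Equiv.ofBijective (p x) (hpbij x)) (fun x => (hXinv x).2)
    (fun s => (hSinv s).1) (fun s => (hSinv s).2) hpmor fun x y => Equiv.ext (hpact x y)
end
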